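/- Let (X,ρ,μ) be a space of homogeneous type with quasi-triangle constant K₀ and doubling constant L, let 0 < q ≤ p < ∞, and let ω be an A₁(X)-weight. Then there exists a positive constant C, depending only on K₀, L, p, and q, such that for every R ∈ (1,∞) and every measurable f with ‖f‖_{L^p_ω(X)} < ∞, one has sup_{s∈(0,1)} s^{p/q} ∫_X (∫_{X∖B(x,R)} |f(x)−f(y)|^q/(U(x,y)·ρ(x,y)^{sq}) dμ(y))^{p/q} ω(x) dμ(x) ≤ C·[ω]²_{A₁(X)}·‖f‖^p_{L^p_ω(X)}. -/

import Mathlib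

noncomputable section

open MeasureTheory Filter Set
open scoped ENNReal NNReal Topology

namespace Paper

variable {X : Type*} [MeasurableSpace X]

/-- The ball with center `x` and radius `r` for the quasi-metric `ρ`. -/
def ball (ρ : X → X → ℝ) (x : X) (r : ℝ) : Set X := {y | ρ x y < r}

/-- `(X, ρ, μ)` is a quasi-metric measure space with quasi-triangle constant `K₀`:
`ρ` is a quasi-metric with constant `K₀` and all `ρ`-balls are `μ`-measurable. -/
structure IsQuasiMetricMeasure (ρ : X → X → ℝ) (μ : Measure X) (K₀ : ℝ) : Prop where
  nonneg : ∀ x y, 0 ≤ ρ x y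
  eq_zero_iff : ∀ x y, ρ x y = 0 ↔ x = y
  symm : ∀ x y, ρ x y = ρ y x
  one_le : 1 ≤ K₀
  triangle : ∀ x y z, ρ x z ≤ K₀ * (ρ x y + ρ y z)
  measurableSet_ball : ∀ x r, MeasurableSet (ball ρ x r)

/-- The doubling condition for `μ` with doubling constant `L ∈ [1, ∞)`:
`0 < μ(B(x,2r)) ≤ L · μ(B(x,r)) < ∞` for all `x` and `r > 0`. -/
def IsDoubling (ρ : X → X → ℝ) (μ : Measure X) (L : ℝ≥0∞) : Prop :=
  1 ≤ L ∧ L < ∞ ∧ ∀ (x : X) (r : ℝ), 0 < r →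
    0 < μ (ball ρ x r) ∧ μ (ball ρ x (2 * r)) ≤ L * μ (ball ρ x r) ∧ μ (ball ρ x r) < ∞

/-- `U(x,y) := min{μ(B(x,ρ(x,y))), μ(B(y,ρ(x,y)))}`. -/
def U (ρ : X → X → ℝ) (μ : Measure X) (x y : X) : ℝ≥0∞ :=
  min (μ (ball ρ x (ρ x y))) (μ (ball ρ y (ρ x y)))

/-- The `A₁(X)` characteristic of a weight `ω`. -/
def A1Const (ρ : X → X → ℝ) (μ : Measure X) (ω : X → ℝ≥0∞) : ℝ≥0∞ :=
  ⨆ (x : X) (r : ℝ) (_ : 0 < r),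
    ((∫⁻ y in ball ρ x r, ω y ∂μ) / μ (ball ρ x r)) /
      essInf ω (μ.restrict (ball ρ x r))


lemma exists_cover {Y : Type*} [MeasurableSpace Y] [Nonempty Y] {ρ : Y → Y → ℝ} {μ : Measure Y}
    {K₀ : ℝ} {L : ℝ≥0∞} (h : IsQuasiMetricMeasure ρ μ K₀) (hd : IsDoubling ρ μ L)
    (r : ℝ) (hr : 0 < r) : ∃ c : ℕ → Y, ∀ y, ∃ i, ρ (c i) y < r := by
  have hK := h.one_le
  obtain ⟨S, hS⟩ := zorn_subset {S : Set Y | ∀ a ∈ S, ∀ b ∈ S, a ≠ b → r ≤ ρ a b} (by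
    intro c hc hch
    refine ⟨⋃₀ c, ?_, fun s hs => subset_sUnion_of_mem hs⟩
    rintro a ⟨s, hs, has⟩ b ⟨t, ht, hbt⟩ hab
    rcases hch.total hs ht with hst | hst
    · exact hc ht a (hst has) b hbt hab
    · exact hc hs a has b (hst hbt) hab)
  have hcov : ∀ y, ∃ a ∈ S, ρ a y < r := by
    intro y
    by_contra! hcon
    have h1 : insert y S ∈ {S : Set Y | ∀ a ∈ S, ∀ b ∈ S, a ≠ b → r ≤ ρ a b} := by
      rintro a (rfl | ha) b (rfl | hb) hab
      · exact absurd rfl hab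
      · rw [h.symm]; exact hcon b hb
      · exact hcon a ha
      · exact hS.prop a ha b hb hab
    have h2 := hS.le_of_ge h1 (subset_insert y S)
    have h3 := hcon y (h2 (mem_insert y S))
    rw [(h.eq_zero_iff y y).2 rfl] at h3
    linarith
  obtain ⟨o⟩ := ‹Nonempty Y›
  have hcount : S.Countable := by
    have hSn : S = ⋃ n : ℕ, {a ∈ S | ρ o a < n} := by
      ext a
      simp only [mem_iUnion]
      constructor
      · intro ha
        obtain ⟨n, hn⟩ := exists_nat_gt (ρ o a)
        exact ⟨n, ha, hn⟩
      · rintro ⟨n, ha, -⟩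
        exact ha
    rw [hSn]
    refine countable_iUnion fun n => ?_
    set δ := r / (2 * K₀) with hδ
    have hδ0 : 0 < δ := by positivity
    have hKδ : K₀ * (2 * δ) = r := by rw [hδ]; field_simp
    have hN : 0 < K₀ * (n + δ) := by positivity
    haveI : IsFiniteMeasure (μ.restrict (ball ρ o (K₀ * (n + δ)))) :=
      ⟨by rw [Measure.restrict_apply_univ]; exact (hd.2.2 o _ hN).2.2⟩
    have := Measure.countable_meas_pos_of_disjoint_iUnion
      (μ := μ.restrict (ball ρ o (K₀ * (n + δ))))
      (As := fun a : {a ∈ S | ρ o a < n} => ball ρ a.1 δ) 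
      (fun a => h.measurableSet_ball _ _) ?_
    · rw [← Set.countable_coe_iff]
      rw [← Set.countable_univ_iff]
      convert this using 1
      symm
      rw [eq_univ_iff_forall]
      rintro ⟨a, haS, han⟩
      rw [mem_ofPred_eq, Measure.restrict_apply (h.measurableSet_ball _ _), inter_eq_left.2]
      · exact (hd.2.2 a δ hδ0).1
      · intro z hz
        have hz' : ρ a z < δ := hz
        have := h.triangle o a z
        show ρ o z < _
        have : K₀ * (ρ o a + ρ a z) < K₀ * (n + δ) := by gcongr
        linarith
    · rintro ⟨a, ha, _⟩ ⟨b, hb, _⟩ hab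
      have hab' : a ≠ b := fun e => hab (Subtype.ext e)
      rw [Function.onFun, Set.disjoint_left]
      intro z hz1 hz2
      have hz1 : ρ a z < δ := hz1
      have hz2 : ρ b z < δ := hz2
      have h1 := h.triangle a z b
      have h2 := hS.prop a ha b hb hab'
      rw [h.symm z b] at h1
      have : K₀ * (ρ a z + ρ b z) < K₀ * (2 * δ) := by
        rw [two_mul]; gcongr
      linarith
  have hne : S.Nonempty := by
    obtain ⟨a, ha, _⟩ := hcov o
    exact ⟨a, ha⟩
  obtain ⟨c, hc⟩ := hcount.exists_eq_range hne
  refine ⟨c, fun y => ?_⟩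
  obtain ⟨a, ha, hay⟩ := hcov y
  rw [hc] at ha
  obtain ⟨i, rfl⟩ := ha
  exact ⟨i, hay⟩

lemma doubling_pow {Y : Type*} [MeasurableSpace Y] {ρ : Y → Y → ℝ} {μ : Measure Y}
    {L : ℝ≥0∞} (hd : IsDoubling ρ μ L) (m : ℕ) (x : Y) (r : ℝ) (hr : 0 < r) :
    μ (ball ρ x (2 ^ m * r)) ≤ L ^ m * μ (ball ρ x r) := by
  induction m with
  | zero => simp
  | succ k ih =>
    have := (hd.2.2 x (2 ^ k * r) (by positivity)).2.1
    rw [pow_succ', mul_assoc, pow_succ', mul_assoc]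
    exact this.trans (by gcongr)

lemma ball_mono {Y : Type*} {ρ : Y → Y → ℝ} (x : Y) {r s : ℝ} (h : r ≤ s) :
    ball ρ x r ⊆ ball ρ x s := fun _ hz => lt_of_lt_of_le hz h

lemma ball_compare {Y : Type*} [MeasurableSpace Y] {ρ : Y → Y → ℝ} {μ : Measure Y}
    {K₀ : ℝ} {L : ℝ≥0∞} (h : IsQuasiMetricMeasure ρ μ K₀) (hd : IsDoubling ρ μ L)
    {m : ℕ} (hm : 32 * K₀ ^ 4 ≤ 2 ^ m) (a b : Y) (r : ℝ) (hr : 0 < r)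
    (hab : ρ a b ≤ 16 * K₀ ^ 3 * r) :
    μ (ball ρ a (16 * K₀ ^ 3 * r)) ≤ L ^ m * μ (ball ρ b r) := by
  have hK := h.one_le
  refine le_trans (measure_mono ?_) (doubling_pow hd m b r hr)
  intro z hz
  have hz : ρ a z < 16 * K₀ ^ 3 * r := hz
  show ρ b z < _
  have h1 := h.triangle b a z
  rw [h.symm b a] at h1
  have h2 : K₀ * (ρ a b + ρ a z) < K₀ * (16 * K₀ ^ 3 * r + 16 * K₀ ^ 3 * r) := by
    have : ρ a b + ρ a z < 16 * K₀ ^ 3 * r + 16 * K₀ ^ 3 * r := by linarith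
    gcongr
  have h3 : K₀ * (16 * K₀ ^ 3 * r + 16 * K₀ ^ 3 * r) = 32 * K₀ ^ 4 * r := by ring
  have h4 : 32 * K₀ ^ 4 * r ≤ 2 ^ m * r := by gcongr
  linarith

lemma essInf_le_avg {Y : Type*} [MeasurableSpace Y] {μ : Measure Y} {ω : Y → ℝ≥0∞} {B : Set Y}
    (h0 : μ B ≠ 0) (ht : μ B ≠ ∞) :
    essInf ω (μ.restrict B) ≤ (∫⁻ y in B, ω y ∂μ) / μ B := by
  rw [ENNReal.le_div_iff_mul_le (Or.inl h0) (Or.inl ht)]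
  have := lintegral_mono_ae (μ := μ.restrict B) (ae_essInf_le (f := ω) (μ := μ.restrict B))
  simpa using this

lemma a1_ball {Y : Type*} [MeasurableSpace Y] {ρ : Y → Y → ℝ} {μ : Measure Y}
    {K₀ : ℝ} {L : ℝ≥0∞} (h : IsQuasiMetricMeasure ρ μ K₀) (hd : IsDoubling ρ μ L)
    {ω : Y → ℝ≥0∞} (hω : ∀ (x : Y) (r : ℝ), 0 < r → (∫⁻ y in ball ρ x r, ω y ∂μ) < ∞)
    (hA : A1Const ρ μ ω < ∞) (x : Y) (r : ℝ) (hr : 0 < r) :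
    ∀ᵐ y ∂μ, y ∈ ball ρ x r →
      (∫⁻ y in ball ρ x r, ω y ∂μ) / μ (ball ρ x r) ≤ A1Const ρ μ ω * ω y := by
  obtain ⟨h0, -, ht⟩ := hd.2.2 x r hr
  have h1 : ((∫⁻ y in ball ρ x r, ω y ∂μ) / μ (ball ρ x r)) /
      essInf ω (μ.restrict (ball ρ x r)) ≤ A1Const ρ μ ω := by
    unfold A1Const
    exact le_iSup_of_le x (le_iSup_of_le r (le_iSup_of_le hr le_rfl))
  have h2 := essInf_le_avg (ω := ω) h0.ne' ht.ne
  have h3 : (∫⁻ y in ball ρ x r, ω y ∂μ) / μ (ball ρ x r) < ∞ :=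
    ENNReal.div_lt_top (hω x r hr).ne h0.ne'
  rw [ENNReal.div_le_iff_le_mul (Or.inr hA.ne) (Or.inl (h2.trans_lt h3).ne)] at h1
  have h4 := ae_essInf_le (f := ω) (μ := μ.restrict (ball ρ x r))
  rw [ae_restrict_iff' (h.measurableSet_ball x r)] at h4
  filter_upwards [h4] with y hy hyB
  exact h1.trans (by gcongr; exact hy hyB)

lemma one_le_a1 {Y : Type*} [MeasurableSpace Y] [Nonempty Y] {ρ : Y → Y → ℝ} {μ : Measure Y}
    {L : ℝ≥0∞} (hd : IsDoubling ρ μ L)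
    {ω : Y → ℝ≥0∞} (hωm : Measurable ω)
    (hω : ∀ (x : Y) (r : ℝ), 0 < r → (∫⁻ y in ball ρ x r, ω y ∂μ) < ∞) :
    ω =ᵐ[μ] 0 ∨ 1 ≤ A1Const ρ μ ω := by
  obtain ⟨o⟩ := ‹Nonempty Y›
  by_cases hz : ∀ n : ℕ, ∫⁻ y in ball ρ o (n + 1), ω y ∂μ = 0
  · left
    have hU : (⋃ n : ℕ, ball ρ o (n + 1)) = univ := by
      rw [eq_univ_iff_forall]
      intro y
      obtain ⟨n, hn⟩ := exists_nat_gt (ρ o y)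
      exact mem_iUnion.2 ⟨n, show ρ o y < n + 1 by linarith⟩
    rw [← lintegral_eq_zero_iff hωm, ← setLIntegral_univ, ← hU]
    have := lintegral_iUnion_le (μ := μ) (fun n : ℕ => ball ρ o (n + 1)) ω
    simpa [hz] using this
  · right
    push Not at hz
    obtain ⟨n, hn⟩ := hz
    have hr : (0:ℝ) < n + 1 := by positivity
    obtain ⟨h0, -, ht⟩ := hd.2.2 o (n + 1) hr
    have h1 : ((∫⁻ y in ball ρ o (n + 1), ω y ∂μ) / μ (ball ρ o (n + 1))) /
        essInf ω (μ.restrict (ball ρ o (n + 1))) ≤ A1Const ρ μ ω := by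
      unfold A1Const
      exact le_iSup_of_le o (le_iSup_of_le (n + 1 : ℝ) (le_iSup_of_le hr le_rfl))
    refine le_trans ?_ h1
    have h2 := essInf_le_avg (ω := ω) h0.ne' ht.ne
    have h3 : (∫⁻ y in ball ρ o (n + 1), ω y ∂μ) / μ (ball ρ o (n + 1)) < ∞ :=
      ENNReal.div_lt_top (hω o _ hr).ne h0.ne'
    rw [ENNReal.le_div_iff_mul_le (Or.inr (ENNReal.div_pos hn ht.ne).ne') (Or.inr h3.ne), one_mul]
    exact h2

lemma scale_kernel {Y : Type*} [MeasurableSpace Y] [Nonempty Y] {ρ : Y → Y → ℝ} {μ : Measure Y}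
    {K₀ : ℝ} {L : ℝ≥0∞} (h : IsQuasiMetricMeasure ρ μ K₀) (hd : IsDoubling ρ μ L)
    {m : ℕ} (hm : 32 * K₀ ^ 4 ≤ 2 ^ m)
    {ω : Y → ℝ≥0∞} (hωm : Measurable ω)
    (hω : ∀ (x : Y) (r : ℝ), 0 < r → (∫⁻ y in ball ρ x r, ω y ∂μ) < ∞)
    (hA : A1Const ρ μ ω < ∞) (r : ℝ) (hr : 0 < r) :
    ∃ g : Y → Y → ℝ≥0∞, Measurable (Function.uncurry g) ∧
      (∀ x y, r ≤ ρ x y → ρ x y < 2 * r → (U ρ μ x y)⁻¹ ≤ L ^ m * g x y) ∧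
      (∀ x, ∫⁻ y, g x y ∂μ ≤ 1) ∧
      (∀ᵐ y ∂μ, ∫⁻ x, ω x * g x y ∂μ ≤ L ^ m * A1Const ρ μ ω * ω y) := by
  classical
  have hK := h.one_le
  have hK0 : 0 < K₀ := by linarith
  have hLm : L ^ m ≠ ∞ := ENNReal.pow_ne_top hd.2.1.ne
  have hLm0 : L ^ m ≠ 0 := pow_ne_zero _ (zero_lt_one.trans_le hd.1).ne'
  obtain ⟨c, hc⟩ := exists_cover h hd r hr
  set n : Y → ℕ := fun x => Nat.find (hc x) with hn
  have hnm : Measurable n := measurable_find hc fun k => h.measurableSet_ball (c k) r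
  have hnx : ∀ x, ρ (c (n x)) x < r := fun x => Nat.find_spec (hc x)
  set Q : ℕ → Set Y := fun i => ball ρ (c i) (4 * K₀ * r) with hQ
  set T : ℕ → Set Y := fun i => ball ρ (c i) (16 * K₀ ^ 3 * r) with hT
  have hQm : ∀ i, MeasurableSet (Q i) := fun i => h.measurableSet_ball _ _
  have hTm : ∀ i, MeasurableSet (T i) := fun i => h.measurableSet_ball _ _
  have hk1 : K₀ ≤ K₀ ^ 2 := by nlinarith
  have hk2 : K₀ ^ 2 ≤ K₀ ^ 3 := by nlinarith [sq_nonneg K₀]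
  have hrad : 4 * K₀ * r ≤ 16 * K₀ ^ 3 * r := by
    gcongr ?_ * r
    nlinarith
  have hk1r : K₀ * r ≤ K₀ ^ 2 * r := by gcongr
  have hk2r : K₀ ^ 2 * r ≤ K₀ ^ 3 * r := by gcongr
  have hkr : r ≤ K₀ * r := by nlinarith
  have hkr0 : 0 < K₀ * r := by positivity
  have hQ0 : ∀ i, μ (Q i) ≠ 0 := fun i => (hd.2.2 _ _ (by positivity)).1.ne'
  have hQt : ∀ i, μ (Q i) ≠ ∞ := fun i => (hd.2.2 _ _ (by positivity)).2.2.ne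
  refine ⟨fun x y => (Q (n x)).indicator (fun _ => (μ (Q (n x)))⁻¹) y, ?_, ?_, ?_, ?_⟩
  · have h1 : Measurable (fun z : ℕ × Y => (Q z.1).indicator (fun _ => (μ (Q z.1))⁻¹) z.2) :=
      measurable_from_prod_countable_right fun i =>
        (measurable_const (a := (μ (Q i))⁻¹)).indicator (hQm i)
    exact h1.comp ((hnm.comp measurable_fst).prodMk measurable_snd)
  · intro x y h1 h2
    have hx := hnx x
    have hcy : ρ (c (n x)) y < 3 * (K₀ * r) := by
      have := h.triangle (c (n x)) x y
      have : K₀ * (ρ (c (n x)) x + ρ x y) < K₀ * (r + 2 * r) := by gcongr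
      linarith
    have hyQ : y ∈ Q (n x) := by
      show ρ _ y < _
      linarith
    simp only [indicator_of_mem hyQ]
    have key : ∀ b, ρ (c (n x)) b ≤ 16 * K₀ ^ 3 * r → μ (Q (n x)) ≤ L ^ m * μ (ball ρ b (ρ x y)) := by
      intro b hb
      calc μ (Q (n x)) ≤ μ (ball ρ (c (n x)) (16 * K₀ ^ 3 * r)) := measure_mono (ball_mono _ hrad)
        _ ≤ L ^ m * μ (ball ρ b r) := ball_compare h hd hm _ _ r hr hb
        _ ≤ _ := by gcongr; exact ball_mono _ h1
    have hU : μ (Q (n x)) ≤ L ^ m * U ρ μ x y := by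
      unfold U
      rcases min_choice (μ (ball ρ x (ρ x y))) (μ (ball ρ y (ρ x y))) with e | e <;> rw [e]
      · exact key x (by nlinarith)
      · exact key y (by nlinarith)
    have : (L ^ m * U ρ μ x y)⁻¹ ≤ (μ (Q (n x)))⁻¹ := ENNReal.inv_le_inv.2 hU
    calc (U ρ μ x y)⁻¹ = L ^ m * (L ^ m * U ρ μ x y)⁻¹ := by
          rw [ENNReal.mul_inv (Or.inl hLm0) (Or.inl hLm), ← mul_assoc,
            ENNReal.mul_inv_cancel hLm0 hLm, one_mul]
      _ ≤ _ := by gcongr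
  · intro x
    rw [lintegral_indicator_const (hQm _), ENNReal.inv_mul_cancel (hQ0 _) (hQt _)]
  · have hae : ∀ᵐ y ∂μ, ∀ i, y ∈ T i →
        (∫⁻ y in T i, ω y ∂μ) / μ (T i) ≤ A1Const ρ μ ω * ω y :=
      ae_all_iff.2 fun i => a1_ball h hd hω hA (c i) _ (by positivity)
    filter_upwards [hae] with y hy
    have hny := hnx y
    have hyT : y ∈ T (n y) := by
      show ρ _ y < _
      nlinarith
    have hpt : ∀ x, ω x * (Q (n x)).indicator (fun _ => (μ (Q (n x)))⁻¹) y ≤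
        (T (n y)).indicator (fun x => ω x * (L ^ m * (μ (T (n y)))⁻¹)) x := by
      intro x
      by_cases hyQ : y ∈ Q (n x)
      · have hyQ' : ρ (c (n x)) y < 4 * K₀ * r := hyQ
        have hx := hnx x
        have hxy : ρ y x < 5 * (K₀ ^ 2 * r) := by
          have h1 := h.triangle y (c (n x)) x
          rw [h.symm y (c (n x))] at h1
          have : K₀ * (ρ (c (n x)) y + ρ (c (n x)) x) < K₀ * (4 * K₀ * r + r) := by gcongr
          nlinarith
        have hxT : x ∈ T (n y) := by
          show ρ _ x < _
          have h1 := h.triangle (c (n y)) y x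
          have : K₀ * (ρ (c (n y)) y + ρ y x) < K₀ * (r + 5 * (K₀ ^ 2 * r)) := by gcongr
          nlinarith
        rw [indicator_of_mem hyQ, indicator_of_mem hxT]
        gcongr
        have hcc : ρ (c (n y)) (c (n x)) ≤ 16 * K₀ ^ 3 * r := by
          have h1 := h.triangle (c (n y)) y (c (n x))
          rw [h.symm y (c (n x))] at h1
          have : K₀ * (ρ (c (n y)) y + ρ (c (n x)) y) < K₀ * (r + 4 * K₀ * r) := by gcongr
          nlinarith
        have h1 : μ (T (n y)) ≤ L ^ m * μ (Q (n x)) := by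
          refine (ball_compare h hd hm _ _ r hr hcc).trans ?_
          gcongr
          exact ball_mono _ (by linarith)
        calc (μ (Q (n x)))⁻¹ = L ^ m * (L ^ m * μ (Q (n x)))⁻¹ := by
              rw [ENNReal.mul_inv (Or.inl hLm0) (Or.inl hLm), ← mul_assoc,
                ENNReal.mul_inv_cancel hLm0 hLm, one_mul]
          _ ≤ _ := by gcongr
      · simp [indicator_of_notMem hyQ]
    calc _ ≤ ∫⁻ x, (T (n y)).indicator (fun x => ω x * (L ^ m * (μ (T (n y)))⁻¹)) x ∂μ :=
          lintegral_mono hpt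
      _ = L ^ m * ((∫⁻ x in T (n y), ω x ∂μ) / μ (T (n y))) := by
          rw [lintegral_indicator (hTm _), lintegral_mul_const _ hωm, ENNReal.div_eq_inv_mul]
          ring
      _ ≤ L ^ m * (A1Const ρ μ ω * ω y) := by gcongr; exact hy _ hyT
      _ = _ := by ring

lemma sigmaFinite_of {Y : Type*} [MeasurableSpace Y] [Nonempty Y] {ρ : Y → Y → ℝ} {μ : Measure Y}
    {L : ℝ≥0∞} (hd : IsDoubling ρ μ L) : SigmaFinite μ := by
  obtain ⟨o⟩ := ‹Nonempty Y›
  refine ⟨⟨⟨fun n : ℕ => ball ρ o (n + 1), fun _ => trivial, fun n => 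
    (hd.2.2 o _ (by positivity)).2.2, ?_⟩⟩⟩
  rw [eq_univ_iff_forall]
  intro y
  obtain ⟨n, hn⟩ := exists_nat_gt (ρ o y)
  exact mem_iUnion.2 ⟨n, show ρ o y < n + 1 by linarith⟩

lemma jensen {Y : Type*} [MeasurableSpace Y] {μ : Measure Y} {h g : Y → ℝ≥0∞}
    (hh : Measurable h) (hg : Measurable g) {t : ℝ} (ht : 1 ≤ t) :
    (∫⁻ y, h y * g y ∂μ) ^ t ≤ (∫⁻ y, g y ∂μ) ^ (t - 1) * ∫⁻ y, h y ^ t * g y ∂μ := by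
  have ht0 : 0 < t := by linarith
  have h1 := eLpNorm'_le_eLpNorm'_mul_rpow_measure_univ (μ := μ.withDensity g) (f := h)
    zero_lt_one ht hh.aestronglyMeasurable
  simp only [eLpNorm', enorm_eq_self, ENNReal.rpow_one, div_one, one_div] at h1
  rw [lintegral_withDensity_eq_lintegral_mul _ hg hh,
    lintegral_withDensity_eq_lintegral_mul _ hg (hh.pow_const t), withDensity_apply _ .univ,
    setLIntegral_univ] at h1
  have h2 := ENNReal.rpow_le_rpow h1 ht0.le
  rw [ENNReal.mul_rpow_of_nonneg _ _ ht0.le, ← ENNReal.rpow_mul, ← ENNReal.rpow_mul,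
    inv_mul_cancel₀ ht0.ne', ENNReal.rpow_one, sub_mul, inv_mul_cancel₀ ht0.ne'] at h2
  simp only [Pi.mul_apply, one_mul] at h2
  simp only [mul_comm (g _)] at h2
  rwa [mul_comm] at h2

lemma add_rpow_le (a b : ℝ≥0∞) {p : ℝ} (hp : 0 ≤ p) :
    (a + b) ^ p ≤ 2 ^ p * (a ^ p + b ^ p) := by
  rcases le_total a b with hab | hab
  · calc (a + b) ^ p ≤ (2 * b) ^ p := by rw [two_mul]; gcongr
      _ = 2 ^ p * b ^ p := ENNReal.mul_rpow_of_nonneg _ _ hp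
      _ ≤ _ := by gcongr; exact le_add_self
  · calc (a + b) ^ p ≤ (2 * a) ^ p := by rw [two_mul]; gcongr
      _ = 2 ^ p * a ^ p := ENNReal.mul_rpow_of_nonneg _ _ hp
      _ ≤ _ := by gcongr; exact le_self_add

lemma kernel_bound {Y : Type*} [MeasurableSpace Y] {μ : Measure Y} [SFinite μ]
    {F ω : Y → ℝ≥0∞} (hF : Measurable F) (hω : Measurable ω) {G : Y → Y → ℝ≥0∞}
    (hG : Measurable (Function.uncurry G)) {S E D : ℝ≥0∞}
    (hG1 : ∀ x, ∫⁻ y, G x y ∂μ ≤ S) (hG2 : ∀ᵐ y ∂μ, ∫⁻ x, ω x * G x y ∂μ ≤ S * E * ω y)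
    {p q : ℝ} (hq : 0 < q) (hqp : q ≤ p) :
    ∫⁻ x, (∫⁻ y, (F x + F y) ^ q * (D * G x y) ∂μ) ^ (p / q) * ω x ∂μ ≤
      D ^ (p / q) * S ^ (p / q) * 2 ^ p * (1 + E) * ∫⁻ x, F x ^ p * ω x ∂μ := by
  set t := p / q with ht
  have ht1 : 1 ≤ t := by rw [ht, le_div_iff₀ hq]; linarith
  have hqt : q * t = p := by rw [ht]; field_simp
  have hp : 0 < p := by linarith
  have hGx : ∀ x, Measurable (G x) := fun x => hG.comp (measurable_const.prodMk measurable_id)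
  have hGy : ∀ y, Measurable (fun x => G x y) := 
    fun y => hG.comp (measurable_id.prodMk measurable_const)
  have mF : Measurable fun x => F x ^ p * ω x := (hF.pow_const p).mul hω
  have mG : ∀ x, Measurable fun y => F y ^ p * G x y := fun x => (hF.pow_const p).mul (hGx x)
  have mW : ∀ y, Measurable fun x => ω x * G x y := fun y => hω.mul (hGy y)
  set N := ∫⁻ x, F x ^ p * ω x ∂μ with hN
  have step1 : ∀ x, (∫⁻ y, (F x + F y) ^ q * (D * G x y) ∂μ) ^ t * ω x ≤
      (D ^ t * S ^ (t - 1) * 2 ^ p) *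
        (F x ^ p * ω x * S + ∫⁻ y, F y ^ p * (ω x * G x y) ∂μ) := by
    intro x
    have hm : Measurable fun y => (F x + F y) ^ q := (hF.const_add (F x)).pow_const q
    have e1 : ∫⁻ y, (F x + F y) ^ q * (D * G x y) ∂μ = D * ∫⁻ y, (F x + F y) ^ q * G x y ∂μ := by
      have hm2 : Measurable fun y => (F x + F y) ^ q * G x y := hm.mul (hGx x)
      rw [← lintegral_const_mul _ hm2]
      congr 1; ext y; ring
    have e2 : (∫⁻ y, (F x + F y) ^ q * G x y ∂μ) ^ t ≤
        S ^ (t - 1) * ∫⁻ y, ((F x + F y) ^ q) ^ t * G x y ∂μ := by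
      refine (jensen hm (hGx x) ht1).trans ?_
      gcongr
      exact hG1 x
    have e3 : ∫⁻ y, ((F x + F y) ^ q) ^ t * G x y ∂μ ≤
        2 ^ p * (F x ^ p * S + ∫⁻ y, F y ^ p * G x y ∂μ) := by
      calc _ ≤ ∫⁻ y, 2 ^ p * (F x ^ p * G x y + F y ^ p * G x y) ∂μ := by
            refine lintegral_mono fun y => ?_
            rw [← ENNReal.rpow_mul, hqt, ← add_mul, ← mul_assoc]
            gcongr
            exact add_rpow_le _ _ hp.le
        _ = 2 ^ p * (F x ^ p * ∫⁻ y, G x y ∂μ + ∫⁻ y, F y ^ p * G x y ∂μ) := by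
            rw [lintegral_const_mul, lintegral_add_left, lintegral_const_mul _ (hGx x)]
            · exact (hGx x).const_mul _
            · exact ((hGx x).const_mul _).add ((hF.pow_const p).mul (hGx x))
        _ ≤ _ := by gcongr; exact hG1 x
    have e4 : ∫⁻ y, F y ^ p * (ω x * G x y) ∂μ = ω x * ∫⁻ y, F y ^ p * G x y ∂μ := by
      rw [← lintegral_const_mul _ (mG x)]
      congr 1; ext y; ring
    rw [e1, e4, ENNReal.mul_rpow_of_nonneg _ _ (by linarith)]
    calc _ ≤ D ^ t * (S ^ (t - 1) * (2 ^ p * (F x ^ p * S + ∫⁻ y, F y ^ p * G x y ∂μ))) * ω x := by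
          gcongr
          exact e2.trans (by gcongr)
      _ = _ := by ring
  have hjm : Measurable (Function.uncurry fun x y => F y ^ p * (ω x * G x y)) :=
    ((hF.comp measurable_snd).pow_const p).mul ((hω.comp measurable_fst).mul hG)
  have step2 : ∫⁻ x, ∫⁻ y, F y ^ p * (ω x * G x y) ∂μ ∂μ ≤ S * E * N := by
    rw [lintegral_lintegral_swap hjm.aemeasurable]
    calc _ = ∫⁻ y, F y ^ p * ∫⁻ x, ω x * G x y ∂μ ∂μ := by
          congr 1; ext y
          rw [lintegral_const_mul _ (mW y)]
      _ ≤ ∫⁻ y, S * E * (F y ^ p * ω y) ∂μ := by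
          refine lintegral_mono_ae ?_
          filter_upwards [hG2] with y hy
          calc _ ≤ F y ^ p * (S * E * ω y) := by gcongr
            _ = _ := by ring
      _ = _ := by rw [lintegral_const_mul _ mF]
  calc _ ≤ ∫⁻ x, (D ^ t * S ^ (t - 1) * 2 ^ p) *
        (F x ^ p * ω x * S + ∫⁻ y, F y ^ p * (ω x * G x y) ∂μ) ∂μ := lintegral_mono step1
    _ = (D ^ t * S ^ (t - 1) * 2 ^ p) *
        (N * S + ∫⁻ x, ∫⁻ y, F y ^ p * (ω x * G x y) ∂μ ∂μ) := by
        have m1 : Measurable fun x => F x ^ p * ω x * S := ((hF.pow_const p).mul hω).mul_const S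
        have m2 : Measurable fun x => F x ^ p * ω x * S + ∫⁻ y, F y ^ p * (ω x * G x y) ∂μ :=
          m1.add hjm.lintegral_prod_right
        rw [lintegral_const_mul _ m2, lintegral_add_left m1,
          lintegral_mul_const _ mF]
    _ ≤ (D ^ t * S ^ (t - 1) * 2 ^ p) * (N * S + S * E * N) := by gcongr
    _ = D ^ t * (S ^ (t - 1) * S ^ (1:ℝ)) * 2 ^ p * (1 + E) * N := by
        rw [ENNReal.rpow_one]; ring
    _ = _ := by
        rw [← ENNReal.rpow_add_of_nonneg _ _ (by linarith) zero_le_one, sub_add_cancel]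

lemma geom_bound {q s : ℝ} (hq : 0 < q) (hs : 0 < s) (hs1 : s < 1) :
    ENNReal.ofReal s * ∑' j : ℕ, (((2:ℝ≥0∞) ^ (s * q))⁻¹) ^ j ≤
      ENNReal.ofReal (1 - (2:ℝ) ^ (-q))⁻¹ := by
  rw [ENNReal.tsum_geometric]
  have hb : (2:ℝ) ^ (-q) < 1 := Real.rpow_lt_one_of_one_lt_of_neg (by norm_num) (by linarith)
  have hb0 : 0 < (2:ℝ) ^ (-q) := by positivity
  have ha : (2:ℝ) ^ (-(s * q)) ≤ 1 - s * (1 - (2:ℝ) ^ (-q)) := by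
    have := rpow_one_add_le_one_add_mul_self (s := (2:ℝ) ^ (-q) - 1) (by linarith) hs.le hs1.le
    rw [add_sub_cancel, ← Real.rpow_mul (by norm_num)] at this
    rw [show -(s * q) = -q * s by ring]
    linarith
  have hae : ((2:ℝ≥0∞) ^ (s * q))⁻¹ = ENNReal.ofReal ((2:ℝ) ^ (-(s * q))) := by
    rw [← ENNReal.rpow_neg, ← ENNReal.ofReal_rpow_of_pos (by norm_num)]
    simp
  have hv : s * (1 - (2:ℝ) ^ (-q)) ≤ 1 - (2:ℝ) ^ (-(s * q)) := by linarith
  have hv0 : 0 < s * (1 - (2:ℝ) ^ (-q)) := mul_pos hs (by linarith)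
  rw [hae, ← ENNReal.ofReal_one, ← ENNReal.ofReal_sub _ (by positivity),
    ← ENNReal.ofReal_inv_of_pos (by linarith), ← ENNReal.ofReal_mul hs.le]
  apply ENNReal.ofReal_le_ofReal
  rw [← div_eq_mul_inv, div_le_iff₀ (by linarith), inv_mul_eq_div, le_div_iff₀ (by linarith)]
  exact hv

theorem statement3 (K₀ : ℝ) (L : ℝ≥0∞) (p q : ℝ) (hq : 0 < q) (hqp : q ≤ p) :
    ∃ C : ℝ≥0, 0 < C ∧
      ∀ (Y : Type*) [MeasurableSpace Y] [Nonempty Y] (ρ : Y → Y → ℝ) (μ : Measure Y),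
        IsQuasiMetricMeasure ρ μ K₀ → IsDoubling ρ μ L →
        ∀ ω : Y → ℝ≥0∞, Measurable ω →
        (∀ (x : Y) (r : ℝ), 0 < r → (∫⁻ y in ball ρ x r, ω y ∂μ) < ∞) →
        A1Const ρ μ ω < ∞ →
        ∀ R : ℝ, 1 < R →
        ∀ f : Y → ℝ, Measurable f →
          (∫⁻ x, ENNReal.ofReal |f x| ^ p * ω x ∂μ) < ∞ →
        ∀ s : ℝ, s ∈ Set.Ioo (0:ℝ) 1 →
        ENNReal.ofReal s ^ (p / q) *
            (∫⁻ x, (∫⁻ y in (ball ρ x R)ᶜ, ENNReal.ofReal |f x - f y| ^ q /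
                (U ρ μ x y * ENNReal.ofReal (ρ x y) ^ (s * q)) ∂μ) ^ (p / q) * ω x ∂μ) ≤
          (C : ℝ≥0∞) * A1Const ρ μ ω ^ 2 * (∫⁻ x, ENNReal.ofReal |f x| ^ p * ω x ∂μ) := by
  obtain ⟨m, hm⟩ := pow_unbounded_of_one_lt (32 * K₀ ^ 4) (one_lt_two)
  set c₁ : ℝ≥0∞ := ENNReal.ofReal (1 - (2:ℝ) ^ (-q))⁻¹ with hc₁
  set C₀ : ℝ≥0∞ := (L ^ m) ^ (p / q) * c₁ ^ (p / q) * 2 ^ p * (2 * L ^ m) with hC₀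
  have hp : 0 < p := by linarith
  have ht0 : 0 ≤ p / q := by positivity
  refine ⟨C₀.toNNReal + 1, by positivity, ?_⟩
  intro Y _ _ ρ μ h hd ω hωm hω hA R hR f hf hfN s hs
  have hLm : L ^ m ≠ ∞ := ENNReal.pow_ne_top hd.2.1.ne
  have hLm1 : 1 ≤ L ^ m := one_le_pow₀ hd.1
  have hC₀t : C₀ ≠ ∞ := by
    refine ENNReal.mul_ne_top (ENNReal.mul_ne_top (ENNReal.mul_ne_top ?_ ?_) ?_) ?_
    · exact ENNReal.rpow_ne_top_of_nonneg ht0 hLm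
    · exact ENNReal.rpow_ne_top_of_nonneg ht0 ENNReal.ofReal_ne_top
    · exact ENNReal.rpow_ne_top_of_nonneg hp.le (by simp)
    · exact ENNReal.mul_ne_top (by simp) hLm
  have hCle : C₀ ≤ ((C₀.toNNReal + 1 : ℝ≥0) : ℝ≥0∞) := by
    rw [ENNReal.coe_add, ENNReal.coe_toNNReal hC₀t]
    exact le_self_add
  haveI := sigmaFinite_of hd
  rcases one_le_a1 hd hωm hω with hz | hA1
  · have : (∫⁻ x, (∫⁻ y in (ball ρ x R)ᶜ, ENNReal.ofReal |f x - f y| ^ q /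
                (U ρ μ x y * ENNReal.ofReal (ρ x y) ^ (s * q)) ∂μ) ^ (p / q) * ω x ∂μ) = 0 := by
      rw [← lintegral_zero (μ := μ)]
      apply lintegral_congr_ae
      filter_upwards [hz] with x hx
      simp [hx]
    rw [this, mul_zero]
    exact zero_le
  have hR0 : 0 < R := by linarith
  have hs0 := hs.1
  choose g hgm hg1 hg2 hg3 using fun j : ℕ =>
    scale_kernel h hd hm.le hωm hω hA (2 ^ j * R) (by positivity)
  set a : ℝ≥0∞ := ((2:ℝ≥0∞) ^ (s * q))⁻¹ with ha
  set S : ℝ≥0∞ := ∑' j : ℕ, a ^ j with hS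
  set G : Y → Y → ℝ≥0∞ := fun x y => ∑' j, a ^ j * g j x y with hG
  have hGm : Measurable (Function.uncurry G) :=
    Measurable.ennreal_tsum fun j => (hgm j).const_mul _
  have hgx : ∀ j x, Measurable (g j x) :=
    fun j x => (hgm j).comp (measurable_const.prodMk measurable_id)
  have hgy : ∀ j y, Measurable (fun x => g j x y) :=
    fun j y => (hgm j).comp (measurable_id.prodMk measurable_const)
  have hG1 : ∀ x, ∫⁻ y, G x y ∂μ ≤ S := by
    intro x
    rw [lintegral_tsum fun j => ((hgx j x).const_mul _).aemeasurable]
    refine ENNReal.tsum_le_tsum fun j => ?_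
    rw [lintegral_const_mul _ (hgx j x)]
    exact mul_le_of_le_one_right' (hg2 j x)
  have hG2 : ∀ᵐ y ∂μ, ∫⁻ x, ω x * G x y ∂μ ≤ S * (L ^ m * A1Const ρ μ ω) * ω y := by
    filter_upwards [ae_all_iff.2 hg3] with y hy
    calc ∫⁻ x, ω x * G x y ∂μ = ∫⁻ x, ∑' j, a ^ j * (ω x * g j x y) ∂μ := by
          congr 1; ext x
          rw [hG, ← ENNReal.tsum_mul_left]
          congr 1; ext j; ring
      _ = ∑' j, a ^ j * ∫⁻ x, ω x * g j x y ∂μ := by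
          have mW : ∀ j, Measurable fun x => ω x * g j x y := fun j => hωm.mul (hgy j y)
          rw [lintegral_tsum fun j => ((mW j).const_mul _).aemeasurable]
          congr 1; ext j
          rw [lintegral_const_mul _ (mW j)]
      _ ≤ ∑' j, a ^ j * (L ^ m * A1Const ρ μ ω * ω y) :=
          ENNReal.tsum_le_tsum fun j => by gcongr; exact hy j
      _ = _ := by rw [ENNReal.tsum_mul_right]; ring
  set F : Y → ℝ≥0∞ := fun x => ENNReal.ofReal |f x| with hF
  have hFm : Measurable F := ENNReal.measurable_ofReal.comp hf.abs
  have hker : ∀ x y, R ≤ ρ x y →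
      (U ρ μ x y * ENNReal.ofReal (ρ x y) ^ (s * q))⁻¹ ≤ L ^ m * G x y := by
    intro x y hxy
    have hρ : 0 < ρ x y := by linarith
    obtain ⟨j, hj1, hj2⟩ := exists_nat_pow_near (x := ρ x y / R) (y := 2)
      ((one_le_div hR0).2 hxy) one_lt_two
    rw [le_div_iff₀ hR0] at hj1
    rw [div_lt_iff₀ hR0] at hj2
    have hU := hg1 j x y hj1 (by rw [pow_succ] at hj2; linarith)
    have hsq : 0 < s * q := by positivity
    have hρ0 : ENNReal.ofReal (ρ x y) ^ (s * q) ≠ 0 :=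
      (ENNReal.rpow_pos (ENNReal.ofReal_pos.2 hρ) ENNReal.ofReal_ne_top).ne'
    have hρt : ENNReal.ofReal (ρ x y) ^ (s * q) ≠ ∞ :=
      ENNReal.rpow_ne_top_of_nonneg hsq.le ENNReal.ofReal_ne_top
    rw [ENNReal.mul_inv (Or.inr hρt) (Or.inr hρ0)]
    have hρa : (ENNReal.ofReal (ρ x y) ^ (s * q))⁻¹ ≤ a ^ j := by
      rw [ha, ← ENNReal.inv_pow, ENNReal.inv_le_inv, ← ENNReal.rpow_natCast, ← ENNReal.rpow_mul,
        mul_comm, ENNReal.rpow_mul, ENNReal.rpow_natCast]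
      gcongr
      have : (2:ℝ≥0∞) ^ j = ENNReal.ofReal (2 ^ j) := by
        rw [ENNReal.ofReal_pow (by norm_num)]; simp
      rw [this]
      apply ENNReal.ofReal_le_ofReal
      have : (0:ℝ) < 2 ^ j := by positivity
      nlinarith
    calc _ ≤ L ^ m * g j x y * a ^ j := by gcongr
      _ = L ^ m * (a ^ j * g j x y) := by ring
      _ ≤ _ := by
        gcongr
        exact ENNReal.le_tsum (f := fun j => a ^ j * g j x y) j
  have hin : ∀ x, (∫⁻ y in (ball ρ x R)ᶜ, ENNReal.ofReal |f x - f y| ^ q /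
                (U ρ μ x y * ENNReal.ofReal (ρ x y) ^ (s * q)) ∂μ) ≤
      ∫⁻ y, (F x + F y) ^ q * (L ^ m * G x y) ∂μ := by
    intro x
    refine (setLIntegral_mono' (h.measurableSet_ball x R).compl fun y hy => ?_).trans
      (setLIntegral_le_lintegral _ _)
    have hy' : R ≤ ρ x y := not_lt.1 hy
    rw [div_eq_mul_inv]
    gcongr
    · rw [hF, ← ENNReal.ofReal_add (abs_nonneg _) (abs_nonneg _)]
      exact ENNReal.ofReal_le_ofReal (abs_sub _ _)
    · exact hker x y hy'
  have hmain := kernel_bound (D := L ^ m) hFm hωm hGm hG1 hG2 hq hqp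
  have hSs := geom_bound hq hs.1 hs.2
  set A := A1Const ρ μ ω with hAdef
  set N := ∫⁻ x, F x ^ p * ω x ∂μ with hN
  calc _ ≤ ENNReal.ofReal s ^ (p / q) *
        ((L ^ m) ^ (p / q) * S ^ (p / q) * 2 ^ p * (1 + L ^ m * A) * N) := by
        gcongr
        refine le_trans (lintegral_mono fun x => ?_) hmain
        exact mul_le_mul_left (ENNReal.rpow_le_rpow (hin x) ht0) _
    _ = (L ^ m) ^ (p / q) * (ENNReal.ofReal s * S) ^ (p / q) * 2 ^ p * (1 + L ^ m * A) * N := by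
        rw [ENNReal.mul_rpow_of_nonneg _ _ ht0]; ring
    _ ≤ (L ^ m) ^ (p / q) * c₁ ^ (p / q) * 2 ^ p * (2 * L ^ m * A ^ 2) * N := by
        gcongr
        have h1 : (1:ℝ≥0∞) ≤ L ^ m * A ^ 2 := one_le_mul hLm1 (one_le_pow₀ hA1)
        have h2 : L ^ m * A ≤ L ^ m * A ^ 2 := by
          gcongr
          exact le_self_pow₀ hA1 (by norm_num)
        calc 1 + L ^ m * A ≤ L ^ m * A ^ 2 + L ^ m * A ^ 2 := add_le_add h1 h2
          _ = _ := by ring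
    _ = C₀ * A ^ 2 * N := by rw [hC₀]; ring
    _ ≤ _ := by gcongr
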